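/- Marginalization lemma (Section 5.2). Consider the East model or the FA-1f model with one empty (right) boundary at density ρ∈(0,1). Let 1≤M<N and let f:Ω_N→[0,∞) with ν(f)=1. Define g:Ω_{N−M}→[0,∞) by averaging out the first M coordinates: g(ζ_1,…,ζ_{N−M}) = Σ_{η'∈{0,1}^M} ∏_{j=1}^M ρ^{η'_j}(1−ρ)^{1−η'_j} · f(η'_1,…,η'_M,ζ_1,…,ζ_{N−M}). Then ν(g)=1 and 𝒟_{N−M}(√g) ≤ 𝒟_N(√f); moreover, if δ∈[0,1] and ν(f·η_{M+1}η_{M+2}) ≥ 1−δ, then ν(g·ζ_1ζ_2) ≥ 1−δ. -/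

import Mathlib

/-!
Identify `Ω_N` with `Ω_M × Ω_{N-M}` through `Fin.append`; under this identification the Bernoulli
weight factorizes, so `ν_N(F) = ν_{N-M}(ζ ↦ Σ_{η'} bern η' · F(η', ζ))` (`expect_append`). This gives
`ν(g) = 1` and, since `η_{M+1} η_{M+2}` depends on `ζ` only, the last claim as well.

For the Dirichlet form, the terms of the first `M` sites are nonnegative and are dropped. For a site
`j` of the last block two facts are combined.
* The map `a ↦ √(Σ w a)` is the `L²(w)` norm of `√a`, so by the reverse triangle inequality
  `(√g(ζ^j) - √g(ζ))² ≤ Σ_{η'} bern η' (√f(η', ζ^j) - √f(η', ζ))²` (`sq_sqrt_sum_sub_le`).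
* The constraint at `j` in the small box is at most the one at `M + j` in the large box
  (`constr_le_append`): they only differ for FA-1f at the first site, where the small box sees an
  occupied left boundary.
-/

open Finset Filter

open scoped Classical

/-- A configuration on the box `{1,…,N}` (0-indexed by `Fin N`). -/
abbrev Config (N : ℕ) := Fin N → Bool

/-- Occupation variable `η_i ∈ {0,1}` as a real number. -/
noncomputable def occ {N : ℕ} (η : Config N) (i : Fin N) : ℝ := if η i then 1 else 0

/-- Bernoulli(ρ) product weight of a configuration. -/
noncomputable def bern (ρ : ℝ) {N : ℕ} (η : Config N) : ℝ :=
  ∏ i, (if η i then ρ else 1 - ρ)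

/-- Expectation under the Bernoulli(ρ) product measure `ν`. -/
noncomputable def expect (ρ : ℝ) {N : ℕ} (f : Config N → ℝ) : ℝ :=
  ∑ η : Config N, bern ρ η * f η

/-- The configuration `η^i`, obtained by flipping `η` at site `i`. -/
def flipAt {N : ℕ} (η : Config N) (i : Fin N) : Config N :=
  Function.update η i (!η i)

/-- Occupation at the 1-indexed position `k ∈ {0,…,N+1}`, with boundary value
`bl` at `k = 0` and `br` at `k = N+1` (and beyond). -/
noncomputable def occAt {N : ℕ} (η : Config N) (bl br : ℝ) (k : ℕ) : ℝ :=
  if hk : k = 0 then bl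
  else if h : k ≤ N then (if η ⟨k - 1, by omega⟩ then 1 else 0) else br

/-- The three kinetically constrained models considered: East (empty right boundary),
FA-1f with two empty boundaries, FA-1f with one empty (right) boundary. -/
inductive KCM | east | fa2 | fa1

/-- The kinetic constraint `r_i(η)` of each model, at the (0-indexed) site `i`. -/
noncomputable def constr (m : KCM) {N : ℕ} (η : Config N) (i : Fin N) : ℝ :=
  match m with
  | KCM.east => 1 - occAt η 0 0 (i.1 + 2)
  | KCM.fa2  => 1 - occAt η 0 0 i.1 * occAt η 0 0 (i.1 + 2)
  | KCM.fa1  => 1 - occAt η 1 0 i.1 * occAt η 1 0 (i.1 + 2)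

/-- The jump rate `c_i(η) = r_i(η)·[η_i(1−ρ)+(1−η_i)ρ]`. -/
noncomputable def crate (m : KCM) (ρ : ℝ) {N : ℕ} (η : Config N) (i : Fin N) : ℝ :=
  constr m η i * (if η i then 1 - ρ else ρ)

/-- The escape rate `𝓗(η) = Σ_i c_i(η)`. -/
noncomputable def escRate (m : KCM) (ρ : ℝ) {N : ℕ} (η : Config N) : ℝ :=
  ∑ i, crate m ρ η i

/-- The Dirichlet form `𝒟_N(g) = Σ_i ν(c_i(η)(g(η^i)−g(η))²)`. -/
noncomputable def dirichlet (m : KCM) (ρ : ℝ) {N : ℕ} (g : Config N → ℝ) : ℝ :=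
  ∑ i, expect ρ (fun η => crate m ρ η i * (g (flipAt η i) - g η) ^ 2)

/-- The rescaled cumulant generating function `φ^{(N)}(λ)`, via the
Donsker–Varadhan variational (principal eigenvalue) formula. -/
noncomputable def phi (m : KCM) (ρ : ℝ) (N : ℕ) (lam : ℝ) : ℝ :=
  sSup { x | ∃ f : Config N → ℝ, (∀ η, 0 ≤ f η) ∧ expect ρ f = 1 ∧
    x = (Real.exp lam - 1) * expect ρ (fun η => f η * escRate m ρ η)
        - Real.exp lam * dirichlet m ρ (fun η => Real.sqrt (f η)) }

/-- The mean instantaneous activity `𝔸 = ν(c_j)` at an interior site `j`: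
`2ρ(1−ρ)²` for East and `2ρ(1−ρ)(1−ρ²)` for FA-1f. -/
noncomputable def meanAct (m : KCM) (ρ : ℝ) : ℝ :=
  match m with
  | KCM.east => 2 * ρ * (1 - ρ) ^ 2
  | _ => 2 * ρ * (1 - ρ) * (1 - ρ ^ 2)

/-- The two-boundary interface energy `Σ_{L,L'}` for FA-1f with two empty
boundaries: the infimum of `𝒟_{L+L'+2}(√f)` over probability densities `f`
with `ν(f·η_{L+1}η_{L+2}) = 1`. -/
noncomputable def SigmaTwo (ρ : ℝ) (L L' : ℕ) : ℝ :=
  sInf { x | ∃ f : Config (L + L' + 2) → ℝ, (∀ η, 0 ≤ f η) ∧ expect ρ f = 1 ∧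
    expect ρ (fun η => f η * occ η ⟨L, by omega⟩ * occ η ⟨L + 1, by omega⟩) = 1 ∧
    x = dirichlet KCM.fa2 ρ (fun η => Real.sqrt (f η)) }

/-- The one-boundary interface energy `Σ_L`: the infimum of `𝒟_L(√f)`
over probability densities `f` with `ν(f·η_1) = 1`, for the model `m`. -/
noncomputable def SigmaOne (m : KCM) (ρ : ℝ) (L : ℕ) : ℝ :=
  sInf { x | ∃ f : Config L → ℝ, (∀ η, 0 ≤ f η) ∧ expect ρ f = 1 ∧
    expect ρ (fun η => f η * occAt η 0 0 1) = 1 ∧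
    x = dirichlet m ρ (fun η => Real.sqrt (f η)) }

/-- Reverse triangle inequality in `L²(w)` for the functions `√a` and `√b`. -/
lemma sq_sqrt_sum_sub_le {ι : Type*} (s : Finset ι) (w a b : ι → ℝ) (hw : ∀ i, 0 ≤ w i)
    (ha : ∀ i, 0 ≤ a i) (hb : ∀ i, 0 ≤ b i) :
    (√(∑ i ∈ s, w i * a i) - √(∑ i ∈ s, w i * b i)) ^ 2
      ≤ ∑ i ∈ s, w i * (√(a i) - √(b i)) ^ 2 := by
  have hcs := Real.sum_sqrt_mul_sqrt_le s (f := fun i => w i * a i) (g := fun i => w i * b i)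
    (fun i => mul_nonneg (hw i) (ha i)) (fun i => mul_nonneg (hw i) (hb i))
  have hcross : ∑ i ∈ s, √(w i * a i) * √(w i * b i) = ∑ i ∈ s, w i * (√(a i) * √(b i)) := by
    refine Finset.sum_congr rfl fun i _ => ?_
    rw [Real.sqrt_mul (hw i), Real.sqrt_mul (hw i)]
    linear_combination (√(a i) * √(b i)) * Real.mul_self_sqrt (hw i)
  have hexp : ∑ i ∈ s, w i * (√(a i) - √(b i)) ^ 2
      = ∑ i ∈ s, w i * a i + ∑ i ∈ s, w i * b i - 2 * ∑ i ∈ s, w i * (√(a i) * √(b i)) := by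
    rw [Finset.mul_sum, ← Finset.sum_add_distrib, ← Finset.sum_sub_distrib]
    refine Finset.sum_congr rfl fun i _ => ?_
    linear_combination w i * Real.sq_sqrt (ha i) + w i * Real.sq_sqrt (hb i)
  have hA := Real.sq_sqrt (Finset.sum_nonneg fun i (_ : i ∈ s) => mul_nonneg (hw i) (ha i))
  have hB := Real.sq_sqrt (Finset.sum_nonneg fun i (_ : i ∈ s) => mul_nonneg (hw i) (hb i))
  rw [hcross] at hcs
  rw [hexp]
  nlinarith

lemma bern_nonneg {ρ : ℝ} (hρ0 : 0 < ρ) (hρ1 : ρ < 1) {N : ℕ} (η : Config N) : 0 ≤ bern ρ η := by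
  refine Finset.prod_nonneg fun i _ => ?_
  split_ifs <;> linarith

lemma bern_append (ρ : ℝ) {M K : ℕ} (η' : Config M) (ζ : Config K) :
    bern ρ (Fin.append η' ζ : Config (M + K)) = bern ρ η' * bern ρ ζ := by
  simp [bern, Fin.prod_univ_add]

/-- Fubini: the expectation over the large box is an iterated expectation over the two blocks. -/
lemma expect_append (ρ : ℝ) {M K : ℕ} (F : Config (M + K) → ℝ) :
    expect ρ F
      = expect ρ (fun ζ : Config K => ∑ η' : Config M, bern ρ η' * F (Fin.append η' ζ)) := by
  unfold _root_.expect
  rw [← (Fin.appendEquiv M K (α := Bool)).sum_comp, Fintype.sum_prod_type_right]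
  refine Finset.sum_congr rfl fun ζ _ => ?_
  rw [Finset.mul_sum]
  refine Finset.sum_congr rfl fun η' _ => ?_
  change bern ρ (Fin.append η' ζ : Config (M + K)) * F (Fin.append η' ζ) = _
  rw [bern_append]
  ring

lemma expect_mono {ρ : ℝ} (hρ0 : 0 < ρ) (hρ1 : ρ < 1) {N : ℕ} {F G : Config N → ℝ}
    (h : ∀ η, F η ≤ G η) : expect ρ F ≤ expect ρ G :=
  Finset.sum_le_sum fun η _ => mul_le_mul_of_nonneg_left (h η) (bern_nonneg hρ0 hρ1 η)

lemma occAt_mem {N : ℕ} (η : Config N) {bl br : ℝ} (hl : bl ∈ Set.Icc (0 : ℝ) 1)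
    (hr : br ∈ Set.Icc (0 : ℝ) 1) (k : ℕ) : occAt η bl br k ∈ Set.Icc (0 : ℝ) 1 := by
  unfold occAt
  split_ifs <;> first | assumption | norm_num

lemma occAt_append {M K : ℕ} (η' : Config M) (ζ : Config K) (bl br : ℝ) {k : ℕ} (hk : k ≠ 0) :
    occAt (Fin.append η' ζ : Config (M + K)) bl br (M + k) = occAt ζ bl br k := by
  unfold occAt
  have h1 : M + k ≠ 0 := by omega
  by_cases h : k ≤ K
  · have h2 : M + k ≤ M + K := by omega
    have h3 : (⟨M + k - 1, by omega⟩ : Fin (M + K)) = Fin.natAdd M ⟨k - 1, by omega⟩ := by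
      ext
      simp only [Fin.val_natAdd]
      omega
    rw [dif_neg h1, dif_neg hk, dif_pos h2, dif_pos h, h3, Fin.append_right]
  · have h2 : ¬ M + k ≤ M + K := by omega
    rw [dif_neg h1, dif_neg hk, dif_neg h2, dif_neg h]

lemma constr_nonneg (m : KCM) {N : ℕ} (η : Config N) (i : Fin N) : 0 ≤ constr m η i := by
  have h0 : (0 : ℝ) ∈ Set.Icc (0 : ℝ) 1 := by norm_num
  have h1 : (1 : ℝ) ∈ Set.Icc (0 : ℝ) 1 := by norm_num
  have key : ∀ x ∈ Set.Icc (0 : ℝ) 1, ∀ y ∈ Set.Icc (0 : ℝ) 1, 0 ≤ 1 - x * y := fun x hx y hy => by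
    have := mul_le_one₀ hx.2 hy.1 hy.2
    linarith
  cases m
  · have := (occAt_mem η h0 h0 (i.1 + 2)).2
    simp only [constr]
    linarith
  · exact key _ (occAt_mem η h0 h0 _) _ (occAt_mem η h0 h0 _)
  · exact key _ (occAt_mem η h1 h0 _) _ (occAt_mem η h1 h0 _)

/-- Gluing a block on the left can only relax the constraint. This fails for FA-1f with two empty
boundaries, whose left boundary facilitates the first site. -/
lemma constr_le_append {m : KCM} (hm : m = KCM.east ∨ m = KCM.fa1) {M K : ℕ} (η' : Config M)
    (ζ : Config K) (j : Fin K) :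
    constr m ζ j ≤ constr m (Fin.append η' ζ : Config (M + K)) (Fin.natAdd M j) := by
  have hright : ∀ bl, occAt (Fin.append η' ζ : Config (M + K)) bl 0 (M + j.1 + 2)
      = occAt ζ bl 0 (j.1 + 2) := fun bl => by
    rw [add_assoc]
    exact occAt_append η' ζ bl 0 (by omega)
  rcases hm with rfl | rfl
  · simp only [constr, Fin.val_natAdd]
    rw [hright]
  · have h0 : (0 : ℝ) ∈ Set.Icc (0 : ℝ) 1 := by norm_num
    have h1 : (1 : ℝ) ∈ Set.Icc (0 : ℝ) 1 := by norm_num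
    have hleft : occAt (Fin.append η' ζ : Config (M + K)) 1 0 (M + j.1) ≤ occAt ζ 1 0 j.1 := by
      by_cases hj : j.1 = 0
      · have : occAt ζ 1 0 j.1 = 1 := by simp [occAt, hj]
        rw [this]
        exact (occAt_mem _ h1 h0 _).2
      · exact (occAt_append η' ζ 1 0 hj).le
    simp only [constr, Fin.val_natAdd]
    rw [hright]
    have := mul_le_mul_of_nonneg_right hleft (occAt_mem ζ h1 h0 (j.1 + 2)).1
    linarith

lemma crate_nonneg (m : KCM) {ρ : ℝ} (hρ0 : 0 < ρ) (hρ1 : ρ < 1) {N : ℕ} (η : Config N)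
    (i : Fin N) : 0 ≤ crate m ρ η i := by
  refine mul_nonneg (constr_nonneg m η i) ?_
  split_ifs <;> linarith

lemma crate_le_append {m : KCM} (hm : m = KCM.east ∨ m = KCM.fa1) {ρ : ℝ} (hρ0 : 0 < ρ)
    (hρ1 : ρ < 1) {M K : ℕ} (η' : Config M) (ζ : Config K) (j : Fin K) :
    crate m ρ ζ j ≤ crate m ρ (Fin.append η' ζ : Config (M + K)) (Fin.natAdd M j) := by
  unfold crate
  rw [Fin.append_right]
  refine mul_le_mul_of_nonneg_right (constr_le_append hm η' ζ j) ?_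
  split_ifs <;> linarith

lemma flipAt_append {M K : ℕ} (η' : Config M) (ζ : Config K) (j : Fin K) :
    flipAt (Fin.append η' ζ : Config (M + K)) (Fin.natAdd M j)
      = Fin.append η' (flipAt ζ j) := by
  unfold flipAt
  funext i
  refine Fin.addCases (fun i => ?_) (fun k => ?_) i
  · rw [Function.update_of_ne (by simp [Fin.ext_iff]; omega), Fin.append_left, Fin.append_left]
  · by_cases h : k = j
    · subst h
      simp
    · rw [Function.update_of_ne (by simpa using h), Fin.append_right, Fin.append_right,
        Function.update_of_ne h]

/-- Marginalization with the large box written as `M + K`, so that `Fin.append` applies. -/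
lemma dirichlet_marginal_le {m : KCM} (hm : m = KCM.east ∨ m = KCM.fa1) {ρ : ℝ} (hρ0 : 0 < ρ)
    (hρ1 : ρ < 1) {M K : ℕ} (f : Config (M + K) → ℝ) (hf : ∀ η, 0 ≤ f η) (g : Config K → ℝ)
    (hg : ∀ ζ, g ζ = ∑ η' : Config M, bern ρ η' * f (Fin.append η' ζ)) :
    dirichlet m ρ (fun ζ => √(g ζ)) ≤ dirichlet m ρ (fun η => √(f η)) := by
  have hnonneg : ∀ i : Fin (M + K),
      0 ≤ expect ρ (fun η => crate m ρ η i * (√(f (flipAt η i)) - √(f η)) ^ 2) := fun i =>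
    Finset.sum_nonneg fun η _ => mul_nonneg (bern_nonneg hρ0 hρ1 η)
      (mul_nonneg (crate_nonneg m hρ0 hρ1 η i) (sq_nonneg _))
  unfold dirichlet
  rw [Fin.sum_univ_add]
  refine le_add_of_nonneg_of_le (Finset.sum_nonneg fun i _ => hnonneg _)
    (Finset.sum_le_sum fun j _ => ?_)
  rw [expect_append]
  refine expect_mono hρ0 hρ1 fun ζ => ?_
  dsimp only
  rw [hg, hg]
  refine (mul_le_mul_of_nonneg_left (sq_sqrt_sum_sub_le _ _ _ _ (fun η' => bern_nonneg hρ0 hρ1 η')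
    (fun _ => hf _) (fun _ => hf _)) (crate_nonneg m hρ0 hρ1 ζ j)).trans ?_
  rw [Finset.mul_sum]
  refine Finset.sum_le_sum fun η' _ => ?_
  rw [flipAt_append, mul_left_comm]
  exact mul_le_mul_of_nonneg_left
    (mul_le_mul_of_nonneg_right (crate_le_append hm hρ0 hρ1 η' ζ j) (sq_nonneg _))
    (bern_nonneg hρ0 hρ1 η')

/-- Observables of the form `f · h(ζ)` have the same expectation under `f` and its marginal `g`. -/
lemma expect_marginal_mul (ρ : ℝ) {M K : ℕ} (f h : Config (M + K) → ℝ) (g k : Config K → ℝ)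
    (hg : ∀ ζ, g ζ = ∑ η' : Config M, bern ρ η' * f (Fin.append η' ζ))
    (hk : ∀ (η' : Config M) ζ, h (Fin.append η' ζ) = k ζ) :
    expect ρ (fun ζ => g ζ * k ζ) = expect ρ (fun η => f η * h η) := by
  rw [expect_append]
  congr 1
  funext ζ
  rw [hg, Finset.sum_mul]
  refine Finset.sum_congr rfl fun η' _ => ?_
  rw [hk, mul_assoc]

/-- The gluing map of the theorem is `Fin.append`; the small box has size `K` with `N = M + K`, which
makes it possible to eliminate `N` and avoid the type `Config (N - M)`. -/
lemma marginalization_aux {ρ : ℝ} (hρ0 : 0 < ρ) (hρ1 : ρ < 1) {m : KCM}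
    (hm : m = KCM.east ∨ m = KCM.fa1) {M N K : ℕ} (hN : N = M + K) (f : Config N → ℝ)
    (hf : ∀ η, 0 ≤ f η) (hf1 : expect ρ f = 1) (g : Config K → ℝ)
    (hg : ∀ ζ : Config K, g ζ = ∑ η' : Config M, bern ρ η' *
      f (fun i => if h : i.1 < M then η' ⟨i.1, h⟩ else ζ ⟨i.1 - M, by omega⟩)) :
    expect ρ g = 1 ∧
    dirichlet m ρ (fun ζ => √(g ζ)) ≤ dirichlet m ρ (fun η => √(f η)) ∧
    expect ρ (fun ζ => g ζ * occAt ζ 0 0 1 * occAt ζ 0 0 2)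
      = expect ρ (fun η => f η * occAt η 0 0 (M + 1) * occAt η 0 0 (M + 2)) := by
  subst hN
  have hg' : ∀ ζ, g ζ = ∑ η' : Config M, bern ρ η' * f (Fin.append η' ζ) := fun ζ => by
    rw [hg]
    refine Finset.sum_congr rfl fun η' _ => ?_
    congr 2
    funext i
    refine Fin.addCases (fun i => ?_) (fun j => ?_) i <;> simp
  refine ⟨?_, dirichlet_marginal_le hm hρ0 hρ1 f hf g hg', ?_⟩
  · simpa [hf1] using expect_marginal_mul ρ f (fun _ => 1) g (fun _ => 1) hg' fun _ _ => rfl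
  · simp only [mul_assoc]
    refine expect_marginal_mul ρ f (fun η => occAt η 0 0 (M + 1) * occAt η 0 0 (M + 2)) g
      (fun ζ => occAt ζ 0 0 1 * occAt ζ 0 0 2) hg' fun η' ζ => ?_
    rw [occAt_append η' ζ 0 0 one_ne_zero, occAt_append η' ζ 0 0 two_ne_zero]

/-- **Marginalization lemma** (Section 5.2). For the East model or the FA-1f model
with one empty (right) boundary at density `ρ ∈ (0,1)`: if `1 ≤ M < N`, `f` is a
probability density on `Ω_N` and `g` on `Ω_{N−M}` is obtained from `f` by averaging
out the first `M` coordinates with Bernoulli(ρ) weights, then `ν(g) = 1`,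
`𝒟_{N−M}(√g) ≤ 𝒟_N(√f)`, and if moreover `ν(f·η_{M+1}η_{M+2}) ≥ 1−δ` for some
`δ ∈ [0,1]` then `ν(g·ζ_1ζ_2) ≥ 1−δ`. -/
theorem marginalization_lemma (ρ : ℝ) (hρ0 : 0 < ρ) (hρ1 : ρ < 1) :
    ∀ m : KCM, m = KCM.east ∨ m = KCM.fa1 →
    ∀ (M N : ℕ), 1 ≤ M → M < N →
    ∀ f : Config N → ℝ, (∀ η, 0 ≤ f η) → expect ρ f = 1 →
    ∀ g : Config (N - M) → ℝ,
      (∀ ζ : Config (N - M), g ζ = ∑ η' : Config M, bern ρ η' *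
        f (fun i => if h : i.1 < M then η' ⟨i.1, h⟩ else ζ ⟨i.1 - M, by omega⟩)) →
      expect ρ g = 1 ∧
      dirichlet m ρ (fun ζ => Real.sqrt (g ζ)) ≤ dirichlet m ρ (fun η => Real.sqrt (f η)) ∧
      (∀ δ : ℝ, 0 ≤ δ → δ ≤ 1 →
        1 - δ ≤ expect ρ (fun η => f η * occAt η 0 0 (M + 1) * occAt η 0 0 (M + 2)) →
        1 - δ ≤ expect ρ (fun ζ => g ζ * occAt ζ 0 0 1 * occAt ζ 0 0 2)) := by
  intro m hm M N _ hMN f hf hf1 g hg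
  obtain ⟨h1, h2, h3⟩ := marginalization_aux hρ0 hρ1 hm
    (show N = M + (N - M) by omega) f hf hf1 g hg
  exact ⟨h1, h2, fun δ _ _ hδ => hδ.trans h3.ge⟩
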